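/- arXiv:2403.00422 — 4 statements merged into one kernel-verified Lean document; each statement's English description precedes it below -/
import Mathlib

section
/- Fix integers T ≥ 0, J_L, J_U ≥ 1, k ≥ 1, constants ℓ̃_{d,j}, ũ_{d,j} ∈ ℝ, row vectors ℓ_{d,j}, u_{d,j} ∈ ℝ^k, and weights w_L, w_U > 0. Let p ∈ ℝ^k be such that d ↦ w_L·L_p(d) + w_U·U_p(d) has a unique maximizer d̂(p) over {0,…,T}, where L_p(d) = max_{1≤j≤J_L}(ℓ̃_{d,j} + ℓ_{d,j}p) and U_p(d) = min_{1≤j≤J_U}(ũ_{d,j} + u_{d,j}p). Then for every d* ∈ {0,…,T} and functions j_L*: {0,…,T} → {1,…,J_L} and j_U*: {0,…,T} → {1,…,J_U}, the following are equivalent: (i) d̂(p) = d* and for every d', j_L*(d') attains max_j(ℓ̃_{d',j} + ℓ_{d',j}p) and j_U*(d') attains min_j(ũ_{d',j} + u_{d',j}p); (ii) w_L(ℓ̃_{d*,j_L*(d*)} + ℓ_{d*,j_L*(d*)}p) + w_U(ũ_{d*,j_U*(d*)} + u_{d*,j_U*(d*)}p) ≥ w_L(ℓ̃_{d',j_L*(d')}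 + ℓ_{d',j_L*(d')}p) + w_U(ũ_{d',j_U*(d')} + u_{d',j_U*(d')}p) for all d'; ℓ̃_{d',j_L*(d')} + ℓ_{d',j_L*(d')}p ≥ ℓ̃_{d',j} + ℓ_{d',j}p for all d' and all j ∈ {1,…,J_L}; and ũ_{d',j_U*(d')} + u_{d',j_U*(d')}p ≤ ũ_{d',j} + u_{d',j}p for all d' and all j ∈ {1,…,J_U}. In particular there exist a matrix A and vector c, not depending on p, with the event in (i) equivalent to Ap ≤ c. (This is Proposition 1, case w_L, w_U ≠ 0, of the paper.) -/
/-!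
If `jLstar d` attains the maximum defining `Lb d` and `jUstar d` the minimum defining `Ub d`, then
`Lb d` and `Ub d` are the values at these indices (`Lb_eq`, `Ub_eq`). Substituting them into the
inequalities saying that `dstar` is a maximizer turns event (i) into system (ii).
System (ii) is a finite family of inequalities between affine functions of `p`; moving the linear
part to the left and the constants to the right gives `A p ≤ c`, with one row for each element of
`Fin (T + 1) ⊕ Fin (T + 1) × Fin JL ⊕ Fin (T + 1) × Fin JU`.
-/

open Finset

noncomputable section

/-- Estimated lower bound `L_p(d) = max_{1≤j≤J_L}(ℓ̃_{d,j} + ℓ_{d,j}p)`. -/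
def Lb {T JL k : ℕ} [NeZero JL] (ltil : Fin (T + 1) → Fin JL → ℝ)
    (lvec : Fin (T + 1) → Fin JL → Fin k → ℝ) (p : Fin k → ℝ) (d : Fin (T + 1)) : ℝ :=
  Finset.univ.sup' Finset.univ_nonempty (fun j => ltil d j + ∑ i, lvec d j i * p i)

/-- Estimated upper bound `U_p(d) = min_{1≤j≤J_U}(ũ_{d,j} + u_{d,j}p)`. -/
def Ub {T JU k : ℕ} [NeZero JU] (util : Fin (T + 1) → Fin JU → ℝ)
    (uvec : Fin (T + 1) → Fin JU → Fin k → ℝ) (p : Fin k → ℝ) (d : Fin (T + 1)) : ℝ :=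
  Finset.univ.inf' Finset.univ_nonempty (fun j => util d j + ∑ i, uvec d j i * p i)

theorem Lb_eq {T JL k : ℕ} [NeZero JL] (ltil : Fin (T + 1) → Fin JL → ℝ)
    (lvec : Fin (T + 1) → Fin JL → Fin k → ℝ) (p : Fin k → ℝ) (d : Fin (T + 1)) (j₀ : Fin JL)
    (h : ∀ j, ltil d j + ∑ i, lvec d j i * p i ≤ ltil d j₀ + ∑ i, lvec d j₀ i * p i) :
    Lb ltil lvec p d = ltil d j₀ + ∑ i, lvec d j₀ i * p i :=
  le_antisymm (Finset.sup'_le _ _ fun j _ => h j)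
    (Finset.le_sup' (fun j => ltil d j + ∑ i, lvec d j i * p i) (Finset.mem_univ j₀))

theorem Ub_eq {T JU k : ℕ} [NeZero JU] (util : Fin (T + 1) → Fin JU → ℝ)
    (uvec : Fin (T + 1) → Fin JU → Fin k → ℝ) (p : Fin k → ℝ) (d : Fin (T + 1)) (j₀ : Fin JU)
    (h : ∀ j, util d j₀ + ∑ i, uvec d j₀ i * p i ≤ util d j + ∑ i, uvec d j i * p i) :
    Ub util uvec p d = util d j₀ + ∑ i, uvec d j₀ i * p i :=
  le_antisymm (Finset.inf'_le (fun j => util d j + ∑ i, uvec d j i * p i) (Finset.mem_univ j₀))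
    (Finset.le_inf' _ _ fun j _ => h j)

/-- A system of linear inequalities indexed by any finite type is a matrix inequality. -/
theorem exists_matrix_of_fintype {ι : Type*} [Fintype ι] {k : ℕ} (a : ι → Fin k → ℝ)
    (b : ι → ℝ) :
    ∃ (m : ℕ) (A : Matrix (Fin m) (Fin k) ℝ) (c : Fin m → ℝ), ∀ p : Fin k → ℝ,
      (∀ x, ∑ i, a x i * p i ≤ b x) ↔ ∀ r, A.mulVec p r ≤ c r := by
  let e := Fintype.equivFin ι
  refine ⟨Fintype.card ι, Matrix.of fun r => a (e.symm r), fun r => b (e.symm r), fun p => ?_⟩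
  exact (e.symm.forall_congr_right (q := fun x => ∑ i, a x i * p i ≤ b x)).symm

/-- Proposition 1, case `w_L, w_U ≠ 0` of Han–McCloskey: selection by the maximal
weighted average `w_L·L_p(d) + w_U·U_p(d)`.  If `p` is such that this objective has a
unique maximizer, then for every `d*` and functions `j_L*`, `j_U*`, the event (i)
"`d̂(p) = d*` and for every `d'` the index `j_L*(d')` attains the max defining `L_p(d')`
and `j_U*(d')` attains the min defining `U_p(d')`" is equivalent to the system of affine
inequalities (ii), and in particular it can be written as `{p : A p ≤ c}` for `A`, `c`
not depending on `p`. -/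
theorem stmt_2
    (T JL JU k : ℕ) [NeZero JL] [NeZero JU]
    (ltil : Fin (T + 1) → Fin JL → ℝ) (lvec : Fin (T + 1) → Fin JL → Fin k → ℝ)
    (util : Fin (T + 1) → Fin JU → ℝ) (uvec : Fin (T + 1) → Fin JU → Fin k → ℝ)
    (hlne : ∀ d j, lvec d j ≠ 0) (hune : ∀ d j, uvec d j ≠ 0)
    (hlinj : ∀ d, Function.Injective (lvec d)) (huinj : ∀ d, Function.Injective (uvec d))
    (wL wU : ℝ) (hwL : 0 < wL) (hwU : 0 < wU)
    (dstar : Fin (T + 1)) (jLstar : Fin (T + 1) → Fin JL) (jUstar : Fin (T + 1) → Fin JU) :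
    (∀ p : Fin k → ℝ,
      (∃! d : Fin (T + 1), ∀ d',
          wL * Lb ltil lvec p d' + wU * Ub util uvec p d'
            ≤ wL * Lb ltil lvec p d + wU * Ub util uvec p d) →
      (((∀ d', wL * Lb ltil lvec p d' + wU * Ub util uvec p d'
            ≤ wL * Lb ltil lvec p dstar + wU * Ub util uvec p dstar)
          ∧ (∀ d' j, ltil d' j + ∑ i, lvec d' j i * p i
              ≤ ltil d' (jLstar d') + ∑ i, lvec d' (jLstar d') i * p i)
          ∧ (∀ d' j, util d' (jUstar d') + ∑ i, uvec d' (jUstar d') i * p i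
              ≤ util d' j + ∑ i, uvec d' j i * p i))
        ↔
        ((∀ d',
            wL * (ltil d' (jLstar d') + ∑ i, lvec d' (jLstar d') i * p i)
              + wU * (util d' (jUstar d') + ∑ i, uvec d' (jUstar d') i * p i)
            ≤ wL * (ltil dstar (jLstar dstar) + ∑ i, lvec dstar (jLstar dstar) i * p i)
              + wU * (util dstar (jUstar dstar) + ∑ i, uvec dstar (jUstar dstar) i * p i))
          ∧ (∀ d' j, ltil d' j + ∑ i, lvec d' j i * p i
              ≤ ltil d' (jLstar d') + ∑ i, lvec d' (jLstar d') i * p i)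
          ∧ (∀ d' j, util d' (jUstar d') + ∑ i, uvec d' (jUstar d') i * p i
              ≤ util d' j + ∑ i, uvec d' j i * p i))))
    ∧
    (∃ (m : ℕ) (A : Matrix (Fin m) (Fin k) ℝ) (c : Fin m → ℝ),
      ∀ p : Fin k → ℝ,
        (∃! d : Fin (T + 1), ∀ d',
            wL * Lb ltil lvec p d' + wU * Ub util uvec p d'
              ≤ wL * Lb ltil lvec p d + wU * Ub util uvec p d) →
        (((∀ d', wL * Lb ltil lvec p d' + wU * Ub util uvec p d'
              ≤ wL * Lb ltil lvec p dstar + wU * Ub util uvec p dstar)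
            ∧ (∀ d' j, ltil d' j + ∑ i, lvec d' j i * p i
                ≤ ltil d' (jLstar d') + ∑ i, lvec d' (jLstar d') i * p i)
            ∧ (∀ d' j, util d' (jUstar d') + ∑ i, uvec d' (jUstar d') i * p i
                ≤ util d' j + ∑ i, uvec d' j i * p i))
          ↔ ∀ r, A.mulVec p r ≤ c r)) := by
  have key : ∀ p : Fin k → ℝ,
      (∀ d' j, ltil d' j + ∑ i, lvec d' j i * p i
          ≤ ltil d' (jLstar d') + ∑ i, lvec d' (jLstar d') i * p i) →
      (∀ d' j, util d' (jUstar d') + ∑ i, uvec d' (jUstar d') i * p i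
          ≤ util d' j + ∑ i, uvec d' j i * p i) →
      ((∀ d', wL * Lb ltil lvec p d' + wU * Ub util uvec p d'
          ≤ wL * Lb ltil lvec p dstar + wU * Ub util uvec p dstar) ↔
        ∀ d', wL * (ltil d' (jLstar d') + ∑ i, lvec d' (jLstar d') i * p i)
            + wU * (util d' (jUstar d') + ∑ i, uvec d' (jUstar d') i * p i)
          ≤ wL * (ltil dstar (jLstar dstar) + ∑ i, lvec dstar (jLstar dstar) i * p i)
            + wU * (util dstar (jUstar dstar) + ∑ i, uvec dstar (jUstar dstar) i * p i)) := by
    intro p hL hU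
    refine forall_congr' fun d' => ?_
    rw [Lb_eq ltil lvec p d' _ (hL d'), Ub_eq util uvec p d' _ (hU d'),
      Lb_eq ltil lvec p dstar _ (hL dstar), Ub_eq util uvec p dstar _ (hU dstar)]
  refine ⟨fun p _ => and_congr_left fun h => key p h.1 h.2, ?_⟩
  obtain ⟨m, A, c, hA⟩ := exists_matrix_of_fintype
    (ι := Fin (T + 1) ⊕ (Fin (T + 1) × Fin JL) ⊕ (Fin (T + 1) × Fin JU))
    (Sum.elim
      (fun d i => wL * lvec d (jLstar d) i + wU * uvec d (jUstar d) i
        - (wL * lvec dstar (jLstar dstar) i + wU * uvec dstar (jUstar dstar) i))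
      (Sum.elim (fun x i => lvec x.1 x.2 i - lvec x.1 (jLstar x.1) i)
        (fun x i => uvec x.1 (jUstar x.1) i - uvec x.1 x.2 i)))
    (Sum.elim
      (fun d => wL * ltil dstar (jLstar dstar) + wU * util dstar (jUstar dstar)
        - (wL * ltil d (jLstar d) + wU * util d (jUstar d)))
      (Sum.elim (fun x => ltil x.1 (jLstar x.1) - ltil x.1 x.2)
        (fun x => util x.1 x.2 - util x.1 (jUstar x.1))))
  refine ⟨m, A, c, fun p _ =>
    (and_congr_left fun h => key p h.1 h.2).trans (Iff.trans ?_ (hA p))⟩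
  simp only [Sum.forall, Prod.forall, Sum.elim_inl, Sum.elim_inr, sub_mul, add_mul, mul_assoc,
    Finset.sum_sub_distrib, Finset.sum_add_distrib, ← Finset.mul_sum]
  refine and_congr ?_ (and_congr ?_ ?_)
  · refine forall_congr' fun d => ?_
    constructor <;> intro h <;> linarith
  all_goals
    refine forall_congr' fun d => forall_congr' fun j => ?_
    constructor <;> intro h <;> linarith

end
end

section
/- (Manski bounds, binary outcome.) Let (Ω, F, P) be a probability space carrying random variables Y(0), Y(1), D, Z, each valued in {0,1}, such that P(Z = z) > 0 for z ∈ {0,1}, and let Y = Y(D) (i.e. Y = Y(1) when D = 1 and Y = Y(0) when D = 0). Assume the mean-independence condition P(Y(d) = 1 | Z = z) = P(Y(d) = 1) for all d, z ∈ {0,1}. Then for each d ∈ {0,1}, with p^{ydz} = P(Y = y, D = d | Z = z): max{p^{1d0}, p^{1d1}} ≤ P(Y(d) = 1) ≤ min{1 − p^{0d0}, 1 − p^{0d1}}. -/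
/-!
On `{D = d}` the observed outcome is `Ypot d`, so `{Yobs = y, D = d} ⊆ {Ypot d = y}`. Conditionally
on `Z = z`, monotonicity of the probability gives the lower bound from `y = true`, and the upper
bound from `y = false` after passing to complements. Mean independence makes the middle term free
of `z`, so the bounds for both values of `z` apply to the same number and can be intersected.
-/

open MeasureTheory ProbabilityTheory
open scoped ENNReal

/-- Manski bounds with a binary outcome.  `Ypot d` is the potential outcome `Y(d)`
(valued in `{0,1}`, encoded as `Bool` with `true = 1`), `D` is the realized treatment,
`Z` is a binary instrument, and the observed outcome is `Y = Y(D)`.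
`p^{ydz} = P(Y = y, D = d | Z = z)` and `W(d) = P(Y(d) = 1)`. -/
theorem stmt_11
    (Ω : Type*) [MeasurableSpace Ω] (P : Measure Ω) [IsProbabilityMeasure P]
    (Ypot : Bool → Ω → Bool) (D Z : Ω → Bool)
    (hYm : ∀ d, Measurable (Ypot d)) (hDm : Measurable D) (hZm : Measurable Z)
    (hZpos : ∀ z : Bool, 0 < P {ω | Z ω = z})
    (Yobs : Ω → Bool) (hYobs : ∀ ω, Yobs ω = Ypot (D ω) ω)
    (hMeanIndep : ∀ (d z : Bool),
      ProbabilityTheory.cond P {ω | Z ω = z} {ω | Ypot d ω = true}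
        = P {ω | Ypot d ω = true})
    (d : Bool) :
    -- p^{ydz} as real numbers
    (max ((ProbabilityTheory.cond P {ω | Z ω = false}
            {ω | Yobs ω = true ∧ D ω = d}).toReal)
         ((ProbabilityTheory.cond P {ω | Z ω = true}
            {ω | Yobs ω = true ∧ D ω = d}).toReal)
        ≤ (P {ω | Ypot d ω = true}).toReal)
    ∧ ((P {ω | Ypot d ω = true}).toReal
        ≤ min (1 - (ProbabilityTheory.cond P {ω | Z ω = false}
                      {ω | Yobs ω = false ∧ D ω = d}).toReal)
              (1 - (ProbabilityTheory.cond P {ω | Z ω = true}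
                      {ω | Yobs ω = false ∧ D ω = d}).toReal)) := by
  have key : ∀ z : Bool,
      (ProbabilityTheory.cond P {ω | Z ω = z} {ω | Yobs ω = true ∧ D ω = d}).toReal
        ≤ (P {ω | Ypot d ω = true}).toReal ∧
      (P {ω | Ypot d ω = true}).toReal
        ≤ 1 - (ProbabilityTheory.cond P {ω | Z ω = z}
          {ω | Yobs ω = false ∧ D ω = d}).toReal := by
    intro z
    have : IsProbabilityMeasure (ProbabilityTheory.cond P {ω | Z ω = z}) :=
      cond_isProbabilityMeasure (hZpos z).ne'
    have hsub : ∀ y : Bool, {ω | Yobs ω = y ∧ D ω = d} ⊆ {ω | Ypot d ω = y} := by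
      rintro y ω ⟨h1, rfl⟩
      exact (hYobs ω).symm.trans h1
    have hmeas : MeasurableSet {ω | Ypot d ω = true} :=
      hYm d (measurableSet_singleton true)
    have hcompl : {ω | Ypot d ω = false} = {ω | Ypot d ω = true}ᶜ := by
      ext ω
      simp
    rw [← hMeanIndep d z]
    refine ⟨measureReal_mono (hsub true), ?_⟩
    have h0 := measureReal_mono (μ := ProbabilityTheory.cond P {ω | Z ω = z}) (hsub false)
    rw [hcompl, probReal_compl_eq_one_sub hmeas] at h0
    simp only [Measure.real] at h0
    linarith
  exact ⟨max_le (key false).1 (key true).1, le_min (key false).2 (key true).2⟩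
end

section
/- (Manski bounds, bounded continuous outcome.) Let (Ω, F, P) be a probability space carrying integrable random variables Y(0), Y(1) taking values in the interval [y^l, y^u], and random variables D, Z valued in {0,1} with P(Z = z) > 0 for z ∈ {0,1}. Let Y = Y(D) and assume E[Y(d) | Z = z] = E[Y(d)] for all d, z ∈ {0,1}. Then for each d ∈ {0,1} and each z ∈ {0,1}: E[Y·1{D = d} | Z = z] + (1 − P(D = d | Z = z))·y^l ≤ E[Y(d)] ≤ E[Y·1{D = d} | Z = z] + (1 − P(D = d | Z = z))·y^u; consequently max_{z∈{0,1}} of the left-hand expressions is a lower bound and min_{z∈{0,1}} of the right-hand expressions is an upper bound for E[Y(d)]. -/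
open MeasureTheory ProbabilityTheory

/-!
The expression `E[Y·1{D=d} | Z=z] + (1 − P(D=d | Z=z))·c` is the expectation, conditional on `Z = z`,
of the variable equal to `Y(d)` on `{D = d}` and to the constant `c` off it
(`integral_ite_add_compl_mul`). Since `yl ≤ Y(d) ≤ yu`, this variable lies below `Y(d)` for `c = yl`
and above it for `c = yu`, so the bounds follow by monotonicity of the integral, together with
`E[Y(d) | Z=z] = E[Y(d)]`.
-/

/-- Filling in an integrable function by a constant `c` off the event `{D = d}` adds
`(1 - Q(D = d)) * c` to its integral over that event. -/
lemma integral_ite_add_compl_mul {Ω : Type*} [MeasurableSpace Ω] (Q : Measure Ω)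
    [IsProbabilityMeasure Q] {f : Ω → ℝ} (hf : Integrable f Q) {D : Ω → Bool}
    (hD : Measurable D) (d : Bool) (c : ℝ) :
    Integrable (fun ω => if D ω = d then f ω else c) Q ∧
    (∫ ω, (if D ω = d then f ω else 0) ∂Q) + (1 - (Q {ω | D ω = d}).toReal) * c
      = ∫ ω, (if D ω = d then f ω else c) ∂Q := by
  have hA : MeasurableSet {ω | D ω = d} := hD (measurableSet_singleton d)
  have h1 : Integrable (fun ω => if D ω = d then f ω else 0) Q := by
    refine (hf.indicator hA).congr (ae_of_all _ fun ω => ?_)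
    simp [Set.indicator_apply]
  have h2 : Integrable ({ω | D ω = d}ᶜ.indicator fun _ => c) Q :=
    (integrable_const c).indicator hA.compl
  have hsum : (fun ω => if D ω = d then f ω else c)
      = fun ω => (if D ω = d then f ω else 0) + {ω | D ω = d}ᶜ.indicator (fun _ => c) ω := by
    funext ω
    by_cases h : D ω = d <;> simp [h]
  refine ⟨hsum ▸ h1.add h2, ?_⟩
  rw [hsum, integral_add h1 h2, integral_indicator_const _ hA.compl, probReal_compl_eq_one_sub hA]
  simp [Measure.real]

/-- Manski bounds with a bounded (possibly continuous) outcome.  `Ypot d` is the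
potential outcome `Y(d)` taking values in `[y^l, y^u]`, `D` is the realized binary
treatment, `Z` is a binary instrument, and the observed outcome is `Y = Y(D)`.
For each `d, z`:
`E[Y·1{D=d} | Z=z] + (1 − P(D=d|Z=z))·y^l ≤ E[Y(d)] ≤ E[Y·1{D=d} | Z=z] + (1 − P(D=d|Z=z))·y^u`,
and consequently the max over `z` of the lower expressions bounds `E[Y(d)]` from below
while the min over `z` of the upper expressions bounds it from above. -/
theorem stmt_12
    (Ω : Type*) [MeasurableSpace Ω] (P : Measure Ω) [IsProbabilityMeasure P]
    (yl yu : ℝ)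
    (Ypot : Bool → Ω → ℝ) (D Z : Ω → Bool)
    (hYm : ∀ d, Measurable (Ypot d)) (hDm : Measurable D) (hZm : Measurable Z)
    (hYint : ∀ d, Integrable (Ypot d) P)
    (hYrange : ∀ d ω, Ypot d ω ∈ Set.Icc yl yu)
    (hZpos : ∀ z : Bool, 0 < P {ω | Z ω = z})
    (Yobs : Ω → ℝ) (hYobs : ∀ ω, Yobs ω = Ypot (D ω) ω)
    (hMeanIndep : ∀ (d z : Bool),
      (∫ ω, Ypot d ω ∂(ProbabilityTheory.cond P {ω | Z ω = z})) = ∫ ω, Ypot d ω ∂P)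
    (d : Bool) :
    (∀ z : Bool,
      (∫ ω, (if D ω = d then Yobs ω else 0) ∂(ProbabilityTheory.cond P {ω | Z ω = z}))
          + (1 - (ProbabilityTheory.cond P {ω | Z ω = z} {ω | D ω = d}).toReal) * yl
        ≤ ∫ ω, Ypot d ω ∂P
      ∧ (∫ ω, Ypot d ω ∂P)
        ≤ (∫ ω, (if D ω = d then Yobs ω else 0) ∂(ProbabilityTheory.cond P {ω | Z ω = z}))
          + (1 - (ProbabilityTheory.cond P {ω | Z ω = z} {ω | D ω = d}).toReal) * yu)
    ∧ (max
        ((∫ ω, (if D ω = d then Yobs ω else 0) ∂(ProbabilityTheory.cond P {ω | Z ω = false}))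
          + (1 - (ProbabilityTheory.cond P {ω | Z ω = false} {ω | D ω = d}).toReal) * yl)
        ((∫ ω, (if D ω = d then Yobs ω else 0) ∂(ProbabilityTheory.cond P {ω | Z ω = true}))
          + (1 - (ProbabilityTheory.cond P {ω | Z ω = true} {ω | D ω = d}).toReal) * yl)
        ≤ ∫ ω, Ypot d ω ∂P)
    ∧ ((∫ ω, Ypot d ω ∂P)
        ≤ min
        ((∫ ω, (if D ω = d then Yobs ω else 0) ∂(ProbabilityTheory.cond P {ω | Z ω = false}))
          + (1 - (ProbabilityTheory.cond P {ω | Z ω = false} {ω | D ω = d}).toReal) * yu)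
        ((∫ ω, (if D ω = d then Yobs ω else 0) ∂(ProbabilityTheory.cond P {ω | Z ω = true}))
          + (1 - (ProbabilityTheory.cond P {ω | Z ω = true} {ω | D ω = d}).toReal) * yu)) := by
  have key : ∀ z : Bool,
      (∫ ω, (if D ω = d then Yobs ω else 0) ∂(ProbabilityTheory.cond P {ω | Z ω = z}))
          + (1 - (ProbabilityTheory.cond P {ω | Z ω = z} {ω | D ω = d}).toReal) * yl
        ≤ ∫ ω, Ypot d ω ∂P
      ∧ (∫ ω, Ypot d ω ∂P)
        ≤ (∫ ω, (if D ω = d then Yobs ω else 0) ∂(ProbabilityTheory.cond P {ω | Z ω = z}))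
          + (1 - (ProbabilityTheory.cond P {ω | Z ω = z} {ω | D ω = d}).toReal) * yu := by
    intro z
    rw [← hMeanIndep d z]
    have : IsProbabilityMeasure (ProbabilityTheory.cond P {ω | Z ω = z}) :=
      cond_isProbabilityMeasure (hZpos z).ne'
    have hf : Integrable (Ypot d) (ProbabilityTheory.cond P {ω | Z ω = z}) :=
      Integrable.of_mem_Icc yl yu (hYm d).aemeasurable (ae_of_all _ (hYrange d))
    have hobs : (fun ω => if D ω = d then Yobs ω else 0)
        = fun ω => if D ω = d then Ypot d ω else 0 := by
      funext ω
      split_ifs with h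
      · rw [hYobs, h]
      · rfl
    obtain ⟨il, el⟩ := integral_ite_add_compl_mul _ hf hDm d yl
    obtain ⟨iu, eu⟩ := integral_ite_add_compl_mul _ hf hDm d yu
    rw [hobs, el, eu]
    constructor
    · refine integral_mono il hf fun ω => ?_
      dsimp only
      split_ifs
      exacts [le_rfl, (hYrange d ω).1]
    · refine integral_mono hf iu fun ω => ?_
      dsimp only
      split_ifs
      exacts [le_rfl, (hYrange d ω).2]
  exact ⟨key, max_le (key false).1 (key true).1, le_min (key false).2 (key true).2⟩
end

section
/- (Bounds for dynamic average potential terminal outcomes.) Let (Ω, F, P) be a probability space carrying, for each d = (d₁,d₂) ∈ {0,1}², a random variable Y₂(d) valued in {0,1}, a random vector D = (D₁,D₂) valued in {0,1}², and a random variable Z with P(Z = z) > 0 for each z in its finite support. Let Y₂ = Y₂(D) and assume Y₂(d) is independent of Z for each d. Then for every d ∈ {0,1}² and every z in the support of Z: P(Y₂ = 1, D = d | Z = z) ≤ P(Y₂(d) = 1) ≤ P(Y₂ = 1, D = d | Z = z) + Σ_{d' ≠ d} P(D = d' | Z = z). Consequently max_z P(Y₂ = 1, D = d | Z = z) ≤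 W(d) ≤ min_z [P(Y₂ = 1, D = d | Z = z) + P(D ≠ d | Z = z)], where W(d) = E[Y₂(d)] = P(Y₂(d) = 1). -/
open MeasureTheory ProbabilityTheory Finset

/-!
Independence of `Y₂(d)` and `Z` gives `P(Y₂(d) = 1) = P(Y₂(d) = 1 | Z = z)`, so everything can be
compared under the single probability measure `P(· | Z = z)`. There, since `Y₂ = Y₂(D)`,
`{Y₂ = 1, D = d} ⊆ {Y₂(d) = 1} ⊆ {Y₂ = 1, D = d} ∪ {D ≠ d}`, and the bounds follow from
monotonicity and subadditivity; for the sum form, `{D ≠ d}` is covered by the events `{D = d'}`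
with `d' ≠ d`.
-/

/-- Bounds for dynamic average potential terminal outcomes.  `Y2pot d` is the potential
terminal outcome under the treatment sequence `d = (d₁,d₂) ∈ {0,1}²` (encoded as
`Bool × Bool`), `D` is the realized treatment sequence, `Y₂ = Y₂(D)` is the observed
terminal outcome, and `Z` is an instrument independent of each `Y₂(d)`.  For every `d`
and every `z` in the support of `Z`:
`P(Y₂=1, D=d | Z=z) ≤ P(Y₂(d)=1) ≤ P(Y₂=1, D=d | Z=z) + Σ_{d'≠d} P(D=d' | Z=z)`. -/
theorem stmt_16
    (Ω : Type*) [MeasurableSpace Ω] (P : Measure Ω) [IsProbabilityMeasure P]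
    (ZT : Type*) [MeasurableSpace ZT] [MeasurableSingletonClass ZT]
    (Y2pot : Bool × Bool → Ω → Bool) (D : Ω → Bool × Bool) (Z : Ω → ZT)
    (hYm : ∀ d, Measurable (Y2pot d)) (hDm : Measurable D) (hZm : Measurable Z)
    (Y2 : Ω → Bool) (hY2 : ∀ ω, Y2 ω = Y2pot (D ω) ω)
    (hIndep : ∀ d, ProbabilityTheory.IndepFun (Y2pot d) Z P)
    (d : Bool × Bool) (z : ZT) (hz : 0 < P {ω | Z ω = z}) :
    ((ProbabilityTheory.cond P {ω | Z ω = z} {ω | Y2 ω = true ∧ D ω = d}).toReal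
      ≤ (P {ω | Y2pot d ω = true}).toReal)
    ∧ ((P {ω | Y2pot d ω = true}).toReal
      ≤ (ProbabilityTheory.cond P {ω | Z ω = z} {ω | Y2 ω = true ∧ D ω = d}).toReal
        + ∑ d' ∈ Finset.univ.erase d,
            (ProbabilityTheory.cond P {ω | Z ω = z} {ω | D ω = d'}).toReal)
    ∧ ((P {ω | Y2pot d ω = true}).toReal
      ≤ (ProbabilityTheory.cond P {ω | Z ω = z} {ω | Y2 ω = true ∧ D ω = d}).toReal
        + (ProbabilityTheory.cond P {ω | Z ω = z} {ω | D ω ≠ d}).toReal) := by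
  have hzm : MeasurableSet {ω | Z ω = z} := hZm (measurableSet_singleton z)
  set Q := ProbabilityTheory.cond P {ω | Z ω = z} with hQ
  have : IsProbabilityMeasure Q := cond_isProbabilityMeasure hz.ne'
  have hPQ : P {ω | Y2pot d ω = true} = Q {ω | Y2pot d ω = true} := by
    have h := (hIndep d).measure_inter_preimage_eq_mul {true} {z}
      (measurableSet_singleton true) (measurableSet_singleton z)
    change P ({ω | Y2pot d ω = true} ∩ {ω | Z ω = z})
      = P {ω | Y2pot d ω = true} * P {ω | Z ω = z} at h
    rw [hQ, cond_apply hzm, Set.inter_comm, h, mul_comm, mul_assoc,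
      ENNReal.mul_inv_cancel hz.ne' (measure_ne_top P _), mul_one]
  have hlow : {ω | Y2 ω = true ∧ D ω = d} ⊆ {ω | Y2pot d ω = true} := by
    rintro ω ⟨h, rfl⟩
    exact (hY2 ω).symm.trans h
  have hup : {ω | Y2pot d ω = true} ⊆ {ω | Y2 ω = true ∧ D ω = d} ∪ {ω | D ω ≠ d} := by
    intro ω h
    by_cases hd : D ω = d
    · subst hd
      exact Or.inl ⟨(hY2 ω).trans h, rfl⟩
    · exact Or.inr hd
  have hcover : {ω | D ω ≠ d} ⊆ ⋃ d' ∈ Finset.univ.erase d, {ω | D ω = d'} := by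
    intro ω h
    simpa using h
  have hne : Q.real {ω | Y2pot d ω = true}
      ≤ Q.real {ω | Y2 ω = true ∧ D ω = d} + Q.real {ω | D ω ≠ d} :=
    (measureReal_mono hup).trans (measureReal_union_le _ _)
  have hsum : Q.real {ω | D ω ≠ d} ≤ ∑ d' ∈ Finset.univ.erase d, Q.real {ω | D ω = d'} :=
    (measureReal_mono hcover (measure_ne_top Q _)).trans (measureReal_biUnion_finset_le _ _)
  rw [hPQ]
  exact ⟨measureReal_mono hlow, hne.trans (add_le_add le_rfl hsum), hne⟩
end
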